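/- Let Ω ⊂ ℝⁿ be a bounded domain and μ0 a nontrivial finite positive Radon measure on Ω. Suppose there exists a weight w ∈ L¹(Ω) with w > 0 almost everywhere such that the inequality (P1*) holds: there exists C > 0 such that for every locally Lipschitz function f on Ω̂ whose local Lipschitz constant is bounded on Ω̂ and whose zero set E := {f = 0} satisfies μ0(E) > 0, one has ∫_Ω |f| dμ0 ≤ C (1 + μ0(Ω)/μ0(E)) ∫_Ω |∇f| w (with finiteness of the right-hand side entailing f ∈ L¹(μ0)). Then the geodesic distance d_Ω̂ belongs to L¹(μ0). -/

import Mathlib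

open MeasureTheory Metric Set
open scoped RealInnerProductSpace ENNReal NNReal

noncomputable section

/-- `ℝⁿ` as a Euclidean space. -/
abbrev En (n : ℕ) := EuclideanSpace ℝ (Fin n)

/-- The geodesic distance, within the set `U`, from the point `x` to the base point `x0`:
the infimum of the lengths (total variations) of rectifiable curves joining `x` to `x0`
inside `U` (non-rectifiable curves have infinite length, so they do not affect the
infimum). -/
def geoDist {X : Type*} [PseudoEMetricSpace X] (U : Set X) (x0 x : X) : ℝ≥0∞ :=
  ⨅ (γ : ℝ → X) (_ : ContinuousOn γ (Set.Icc 0 1)) (_ : Set.MapsTo γ (Set.Icc 0 1) U)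
    (_ : γ 0 = x) (_ : γ 1 = x0), eVariationOn γ (Set.Icc 0 1)

/-- The open measurable cover `Ω̂` associated with a measurable cover `Ω̃`:
`Ω̂ = {x ∈ Ω̃ : dist(x, ℝⁿ \ Ω̃) > 0}`. -/
def hatSet {n : ℕ} (Ot : Set (En n)) : Set (En n) :=
  {x ∈ Ot | 0 < Metric.infDist x Otᶜ}

/-- `f` is locally Lipschitz on `U` with a (uniformly) bounded local Lipschitz constant. -/
def LocLipBdd {n : ℕ} (U : Set (En n)) (f : En n → ℝ) : Prop :=
  ∃ K : ℝ≥0, ∀ x ∈ U, ∃ ε : ℝ, 0 < ε ∧ LipschitzOnWith K f (Metric.ball x ε ∩ U)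

/-!
Some ball of the geodesic distance `d` of radius `k` has positive `μ0`-measure, so the truncation
`max (d - k) 0` is admissible in `(P1*)`. Along segments inside the open set `d` is `1`-Lipschitz,
hence the right-hand side of `(P1*)` is controlled by `∫ |w|`, and `d ≤ max (d - k) 0 + k`.
-/

section GeodesicDistance

variable {X : Type*}

/-- Concatenation of two curves parametrised by `[0, 1]`: first `γ`, then `δ`, each at double
speed. The curves are total functions on `ℝ`, as in `geoDist`, so only the values on `[0, 1]`
matter. -/
def curveConcat (γ δ : ℝ → X) (t : ℝ) : X :=
  if t ≤ 1 / 2 then γ (2 * t) else δ (2 * t - 1)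

theorem curveConcat_eqOn_left (γ δ : ℝ → X) :
    EqOn (curveConcat γ δ) (γ ∘ fun t ↦ 2 * t) (Icc 0 (1 / 2)) :=
  fun _ ht ↦ if_pos ht.2

theorem curveConcat_eqOn_right {γ δ : ℝ → X} (h : γ 1 = δ 0) :
    EqOn (curveConcat γ δ) (δ ∘ fun t ↦ 2 * t - 1) (Icc (1 / 2) 1) := by
  intro t ht
  rcases ht.1.eq_or_lt with rfl | hlt
  · simp [curveConcat, h]
  · exact if_neg hlt.not_ge

theorem mapsTo_two_mul_Icc : MapsTo (fun t : ℝ ↦ 2 * t) (Icc 0 (1 / 2)) (Icc 0 1) :=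
  fun _ ht ↦ ⟨by linarith [ht.1], by linarith [ht.2]⟩

theorem mapsTo_two_mul_sub_one_Icc :
    MapsTo (fun t : ℝ ↦ 2 * t - 1) (Icc (1 / 2) 1) (Icc 0 1) :=
  fun _ ht ↦ ⟨by linarith [ht.1], by linarith [ht.2]⟩

theorem Icc_zero_half_union_Icc_half_one : Icc (0 : ℝ) (1 / 2) ∪ Icc (1 / 2) 1 = Icc 0 1 :=
  Icc_union_Icc_eq_Icc (by norm_num) (by norm_num)

theorem mapsTo_curveConcat {U : Set X} {γ δ : ℝ → X} (h : γ 1 = δ 0)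
    (hγ : MapsTo γ (Icc 0 1) U) (hδ : MapsTo δ (Icc 0 1) U) :
    MapsTo (curveConcat γ δ) (Icc 0 1) U := by
  rw [← Icc_zero_half_union_Icc_half_one]
  exact ((hγ.comp mapsTo_two_mul_Icc).congr (curveConcat_eqOn_left γ δ).symm).union
    ((hδ.comp mapsTo_two_mul_sub_one_Icc).congr (curveConcat_eqOn_right h).symm)

theorem continuousOn_curveConcat [TopologicalSpace X] {γ δ : ℝ → X} (h : γ 1 = δ 0)
    (hγ : ContinuousOn γ (Icc 0 1)) (hδ : ContinuousOn δ (Icc 0 1)) :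
    ContinuousOn (curveConcat γ δ) (Icc 0 1) := by
  rw [← Icc_zero_half_union_Icc_half_one]
  refine ContinuousOn.union_of_isClosed ?_ ?_ isClosed_Icc isClosed_Icc
  · exact (hγ.comp (by fun_prop) mapsTo_two_mul_Icc).congr (curveConcat_eqOn_left γ δ)
  · exact (hδ.comp (by fun_prop) mapsTo_two_mul_sub_one_Icc).congr (curveConcat_eqOn_right h)

variable [PseudoEMetricSpace X]

theorem eVariationOn_curveConcat_le {γ δ : ℝ → X} (h : γ 1 = δ 0) :
    eVariationOn (curveConcat γ δ) (Icc 0 1) ≤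
      eVariationOn γ (Icc 0 1) + eVariationOn δ (Icc 0 1) := by
  have hsplit := eVariationOn.Icc_add_Icc (curveConcat γ δ) (s := univ)
    (a := 0) (b := 1 / 2) (c := 1) (by norm_num) (by norm_num) (mem_univ _)
  simp only [univ_inter] at hsplit
  rw [← hsplit, eVariationOn.eq_of_eqOn (curveConcat_eqOn_left γ δ),
    eVariationOn.eq_of_eqOn (curveConcat_eqOn_right h)]
  gcongr
  · exact eVariationOn.comp_le_of_monotoneOn _ _ (fun _ _ _ _ hab ↦ by linarith)
      mapsTo_two_mul_Icc
  · exact eVariationOn.comp_le_of_monotoneOn _ _ (fun _ _ _ _ hab ↦ by linarith)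
      mapsTo_two_mul_sub_one_Icc

theorem geoDist_le_eVariationOn {U : Set X} {γ : ℝ → X} (hc : ContinuousOn γ (Icc 0 1))
    (hm : MapsTo γ (Icc 0 1) U) : geoDist U (γ 1) (γ 0) ≤ eVariationOn γ (Icc 0 1) :=
  iInf_le_of_le γ <| iInf_le_of_le hc <| iInf_le_of_le hm <| iInf_le_of_le rfl <|
    iInf_le_of_le rfl le_rfl

theorem geoDist_triangle (U : Set X) (x y z : X) :
    geoDist U z x ≤ geoDist U y x + geoDist U z y := by
  conv_rhs => simp only [geoDist, ENNReal.add_iInf, ENNReal.iInf_add]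
  refine le_iInf fun δ ↦ le_iInf fun hδc ↦ le_iInf fun hδm ↦ le_iInf fun hδ0 ↦
    le_iInf fun hδ1 ↦ le_iInf fun γ ↦ le_iInf fun hγc ↦ le_iInf fun hγm ↦
    le_iInf fun hγ0 ↦ le_iInf fun hγ1 ↦ ?_
  have hγδ : γ 1 = δ 0 := hγ1.trans hδ0.symm
  have hstart : curveConcat γ δ 0 = x := by simp [curveConcat, hγ0]
  have hend : curveConcat γ δ 1 = z := by norm_num [curveConcat, hδ1]
  calc geoDist U z x = geoDist U (curveConcat γ δ 1) (curveConcat γ δ 0) := by rw [hstart, hend]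
    _ ≤ eVariationOn (curveConcat γ δ) (Icc 0 1) :=
      geoDist_le_eVariationOn (continuousOn_curveConcat hγδ hγc hδc)
        (mapsTo_curveConcat hγδ hγm hδm)
    _ ≤ eVariationOn γ (Icc 0 1) + eVariationOn δ (Icc 0 1) := eVariationOn_curveConcat_le hγδ

end GeodesicDistance

section NormedSpace

variable {E : Type*} [SeminormedAddCommGroup E] [NormedSpace ℝ E] {U : Set E}

theorem eVariationOn_lineMap_Icc_le (x y : E) :
    eVariationOn (AffineMap.lineMap x y : ℝ → E) (Icc 0 1) ≤ edist x y := by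
  have hid : eVariationOn (id : ℝ → ℝ) (Icc 0 1) ≤ 1 := by
    simp
  calc eVariationOn (AffineMap.lineMap x y : ℝ → E) (Icc 0 1)
      ≤ nndist x y * eVariationOn (id : ℝ → ℝ) (Icc 0 1) :=
        (lipschitzWith_lineMap x y).lipschitzOnWith.comp_eVariationOn_le (mapsTo_univ id _)
    _ ≤ nndist x y * 1 := by gcongr
    _ = edist x y := by rw [mul_one, edist_nndist]

theorem geoDist_le_edist_of_segment_subset {x y : E} (h : segment ℝ x y ⊆ U) :
    geoDist U y x ≤ edist x y := by
  have hmaps : MapsTo (AffineMap.lineMap x y : ℝ → E) (Icc 0 1) U := by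
    rwa [mapsTo_iff_image_subset, ← segment_eq_image_lineMap]
  have hle := geoDist_le_eVariationOn AffineMap.lineMap_continuous.continuousOn hmaps
  rw [AffineMap.lineMap_apply_zero, AffineMap.lineMap_apply_one] at hle
  exact hle.trans (eVariationOn_lineMap_Icc_le x y)

theorem geoDist_ne_top (hU : IsOpen U) (hUc : IsPreconnected U) {x y : E} (hx : x ∈ U)
    (hy : y ∈ U) : geoDist U x y ≠ ⊤ := by
  refine hUc.induction₂' (fun a b ↦ geoDist U a b ≠ ⊤) (fun a ha ↦ ?_)
    (fun a b c _ _ _ hab hbc ↦ ?_) hx hy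
  · obtain ⟨ε, hε, hball⟩ := Metric.isOpen_iff.1 hU a ha
    have hconv := convex_ball a ε
    have haε := mem_ball_self (x := a) hε
    filter_upwards [mem_nhdsWithin_of_mem_nhds (ball_mem_nhds a hε)] with b hb
    exact ⟨ne_top_of_le_ne_top (edist_ne_top b a) <|
        geoDist_le_edist_of_segment_subset ((hconv.segment_subset hb haε).trans hball),
      ne_top_of_le_ne_top (edist_ne_top a b) <|
        geoDist_le_edist_of_segment_subset ((hconv.segment_subset haε hb).trans hball)⟩
  · exact ne_top_of_le_ne_top (ENNReal.add_ne_top.2 ⟨hbc, hab⟩) (geoDist_triangle U c b a)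

theorem lipschitzOnWith_toReal_geoDist {s : Set E} {x0 : E} (hs : Convex ℝ s) (hsU : s ⊆ U)
    (hfin : ∀ x ∈ s, geoDist U x0 x ≠ ⊤) :
    LipschitzOnWith 1 (fun x ↦ (geoDist U x0 x).toReal) s := by
  refine LipschitzOnWith.of_le_add fun x hx y hy ↦ ?_
  have hle : geoDist U x0 x ≤ geoDist U x0 y + edist x y := by
    rw [add_comm]
    exact (geoDist_triangle U x y x0).trans <| add_le_add_left
      (geoDist_le_edist_of_segment_subset ((hs.segment_subset hx hy).trans hsU)) _
  rw [dist_edist, ← ENNReal.toReal_add (hfin y hy) (edist_ne_top x y)]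
  exact ENNReal.toReal_mono (ENNReal.add_ne_top.2 ⟨hfin y hy, edist_ne_top x y⟩) hle

end NormedSpace

section LocallyLipschitz

variable {n : ℕ} {U : Set (En n)} {f : En n → ℝ}

theorem locLipBdd_toReal_geoDist (hU : IsOpen U) (hUc : IsPreconnected U) {x0 : En n}
    (hx0 : x0 ∈ U) : LocLipBdd U fun x ↦ (geoDist U x0 x).toReal := by
  refine ⟨1, fun x hx ↦ ?_⟩
  obtain ⟨ε, hε, hball⟩ := Metric.isOpen_iff.1 hU x hx
  exact ⟨ε, hε, (lipschitzOnWith_toReal_geoDist (convex_ball x ε) hball fun y hy ↦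
    geoDist_ne_top hU hUc hx0 (hball hy)).mono inter_subset_left⟩

theorem LocLipBdd.lipschitzWith_comp (hf : LocLipBdd U f) {g : ℝ → ℝ} {L : ℝ≥0}
    (hg : LipschitzWith L g) : LocLipBdd U (g ∘ f) := by
  obtain ⟨K, hK⟩ := hf
  refine ⟨L * K, fun x hx ↦ ?_⟩
  obtain ⟨ε, hε, hlip⟩ := hK x hx
  exact ⟨ε, hε, hg.comp_lipschitzOnWith hlip⟩

theorem LocLipBdd.exists_norm_gradient_le (hf : LocLipBdd U f) (hU : IsOpen U) :
    ∃ K : ℝ≥0, ∀ x ∈ U, ‖gradient f x‖ ≤ K := by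
  obtain ⟨K, hK⟩ := hf
  refine ⟨K, fun x hx ↦ ?_⟩
  obtain ⟨ε, hε, hlip⟩ := hK x hx
  rw [gradient, LinearIsometryEquiv.norm_map]
  exact norm_fderiv_le_of_lipschitzOn ℝ
    (Filter.inter_mem (ball_mem_nhds x hε) (hU.mem_nhds hx)) hlip

theorem LocLipBdd.lintegral_norm_gradient_mul_lt_top (hf : LocLipBdd U f) (hU : IsOpen U)
    {s : Set (En n)} (hs : MeasurableSet s) (hsU : s ⊆ U) {μ : Measure (En n)} {w : En n → ℝ}
    (hw : HasFiniteIntegral w (μ.restrict s)) :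
    ∫⁻ x in s, ENNReal.ofReal (‖gradient f x‖ * w x) ∂μ < ⊤ := by
  obtain ⟨K, hK⟩ := hf.exists_norm_gradient_le hU
  calc ∫⁻ x in s, ENNReal.ofReal (‖gradient f x‖ * w x) ∂μ
      ≤ ∫⁻ x in s, K * ‖w x‖ₑ ∂μ := by
        refine setLIntegral_mono' hs fun x hx ↦ ?_
        rw [ENNReal.ofReal_mul (norm_nonneg _)]
        gcongr
        · exact ENNReal.ofReal_le_coe.2 (hK x (hsU hx))
        · exact Real.ofReal_le_enorm (w x)
    _ = K * ∫⁻ x in s, ‖w x‖ₑ ∂μ := lintegral_const_mul' _ _ ENNReal.coe_ne_top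
    _ < ⊤ := ENNReal.mul_lt_top ENNReal.coe_lt_top hw

end LocallyLipschitz

section MeasurableCover

theorem subset_closure_of_measure_diff_eq_zero {X : Type*} [TopologicalSpace X]
    [MeasurableSpace X] {μ : Measure X} [μ.IsOpenPosMeasure] {U s : Set X} (hU : IsOpen U)
    (h : μ (U \ s) = 0) : U ⊆ closure s := by
  rw [← sdiff_eq_empty]
  exact (hU.sdiff isClosed_closure).eq_empty_of_measure_zero
    (measure_mono_null (sdiff_subset_sdiff_right subset_closure) h)

theorem compl_nonempty_of_measure_diff_eq_zero {X : Type*} [MeasurableSpace X] {μ : Measure X}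
    {s t : Set X} (hμ : μ univ = ⊤) (hs : μ s ≠ ⊤) (h : μ (t \ s) = 0) : tᶜ.Nonempty := by
  rw [nonempty_compl]
  rintro rfl
  exact hs <| top_le_iff.1 <| hμ ▸ measure_mono_ae (ae_le_set.2 h)

theorem isPreconnected_interior_of_measure_diff_eq_zero {X : Type*} [TopologicalSpace X]
    [MeasurableSpace X] {μ : Measure X} [μ.IsOpenPosMeasure] {s t : Set X} (hs : IsOpen s)
    (hsc : IsPreconnected s) (hst : s ⊆ t) (h : μ (t \ s) = 0) :
    IsPreconnected (interior t) :=
  hsc.subset_closure (interior_maximal hst hs) <| subset_closure_of_measure_diff_eq_zero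
    isOpen_interior (measure_mono_null (sdiff_subset_sdiff_left interior_subset) h)

-- `hatSet univ = ∅`, since `infDist x ∅ = 0`.
theorem hatSet_eq_interior {n : ℕ} {Ot : Set (En n)} (hne : Otᶜ.Nonempty) :
    hatSet Ot = interior Ot := by
  ext x
  rw [hatSet, mem_ofPred_eq, ← infDist_pos_iff_notMem_closure hne, closure_compl, notMem_compl_iff]
  exact and_iff_right_of_imp fun hx ↦ interior_subset hx

end MeasurableCover

theorem exists_nat_measure_sublevel_pos {α : Type*} [MeasurableSpace α] {μ : Measure α}
    {s : Set α} (hs : μ s ≠ 0) (g : α → ℝ) : ∃ k : ℕ, 0 < μ {x ∈ s | g x ≤ k} := by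
  refine exists_measure_pos_of_not_measure_iUnion_null fun hnull ↦ hs ?_
  refine measure_mono_null (fun x hx ↦ ?_) hnull
  obtain ⟨k, hk⟩ := exists_nat_ge (g x)
  exact mem_iUnion.2 ⟨k, hx, hk⟩

theorem le_ofReal_abs_max_toReal_sub_add {a : ℝ≥0∞} (ha : a ≠ ⊤) (k : ℕ) :
    a ≤ ENNReal.ofReal |max (a.toReal - k) 0| + k := by
  rw [← ENNReal.ofReal_natCast, ← ENNReal.ofReal_add (abs_nonneg _) k.cast_nonneg]
  refine ENNReal.le_ofReal_iff_toReal_le ha (by positivity) |>.2 ?_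
  linarith [le_abs_self (max (a.toReal - k) 0), le_max_left (a.toReal - k) 0]

/-- The inequality `(P1*)` with weight `w` and constant `C`, tested on the functions that are
locally Lipschitz with bounded local Lipschitz constant on `U`; in the paper `U = Ω̂`. Lower
integrals make it meaningful without integrability of `f`. -/
def WeightedPoincare {n : ℕ} (Ω U : Set (En n)) (μ0 : Measure (En n)) (w : En n → ℝ) (C : ℝ) :
    Prop :=
  ∀ f : En n → ℝ, LocLipBdd U f →
    0 < μ0 {x ∈ Ω | f x = 0} →
    ∫⁻ x in Ω, ENNReal.ofReal |f x| ∂μ0 ≤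
      ENNReal.ofReal C * (1 + μ0 Ω / μ0 {x ∈ Ω | f x = 0}) *
        ∫⁻ x in Ω, ENNReal.ofReal (‖gradient f x‖ * w x)

section WeightedPoincare

variable {n : ℕ} {Ω U : Set (En n)} {μ0 : Measure (En n)} {w : En n → ℝ} {C : ℝ}

theorem WeightedPoincare.lintegral_ofReal_abs_lt_top (hP : WeightedPoincare Ω U μ0 w C)
    (hU : IsOpen U) (hΩ : MeasurableSet Ω) (hΩU : Ω ⊆ U) (hμΩ : μ0 Ω ≠ ⊤)
    (hw : IntegrableOn w Ω) {f : En n → ℝ} (hf : LocLipBdd U f)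
    (hzero : 0 < μ0 {x ∈ Ω | f x = 0}) :
    ∫⁻ x in Ω, ENNReal.ofReal |f x| ∂μ0 < ⊤ := by
  have hratio : 1 + μ0 Ω / μ0 {x ∈ Ω | f x = 0} < ⊤ :=
    ENNReal.add_lt_top.2 ⟨ENNReal.one_lt_top, ENNReal.div_lt_top hμΩ hzero.ne'⟩
  exact (hP f hf hzero).trans_lt <| ENNReal.mul_lt_top
    (ENNReal.mul_lt_top ENNReal.ofReal_lt_top hratio)
    (hf.lintegral_norm_gradient_mul_lt_top hU hΩ hΩU hw.hasFiniteIntegral)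

theorem stmt_3_general (hU : IsOpen U) (hUc : IsPreconnected U) (hΩ : MeasurableSet Ω)
    (hΩU : Ω ⊆ U) {x0 : En n} (hx0 : x0 ∈ U) (hμΩ : μ0 Ω ≠ ⊤) (hw : IntegrableOn w Ω)
    (hP : WeightedPoincare Ω U μ0 w C) :
    ∫⁻ x in Ω, geoDist U x0 x ∂μ0 < ⊤ := by
  rcases eq_or_ne (μ0 Ω) 0 with hzero | hpos
  · simp [Measure.restrict_eq_zero.2 hzero]
  obtain ⟨k, hk⟩ := exists_nat_measure_sublevel_pos hpos fun x ↦ (geoDist U x0 x).toReal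
  let f : En n → ℝ := fun x ↦ max ((geoDist U x0 x).toReal - k) 0
  have hf : LocLipBdd U f := (locLipBdd_toReal_geoDist hU hUc hx0).lipschitzWith_comp
    ((LipschitzWith.id.sub (LipschitzWith.const (k : ℝ))).max_const 0)
  have hfzero : 0 < μ0 {x ∈ Ω | f x = 0} := by
    simpa only [f, max_eq_right_iff, sub_nonpos] using hk
  calc ∫⁻ x in Ω, geoDist U x0 x ∂μ0
      ≤ ∫⁻ x in Ω, (ENNReal.ofReal |f x| + k) ∂μ0 := setLIntegral_mono' hΩ fun x hx ↦
        le_ofReal_abs_max_toReal_sub_add (geoDist_ne_top hU hUc hx0 (hΩU hx)) k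
    _ = ∫⁻ x in Ω, ENNReal.ofReal |f x| ∂μ0 + k * μ0 Ω := by
        rw [lintegral_add_right _ measurable_const, setLIntegral_const]
    _ < ⊤ := ENNReal.add_lt_top.2
        ⟨hP.lintegral_ofReal_abs_lt_top hU hΩ hΩU hμΩ hw hf hfzero,
          ENNReal.mul_lt_top (ENNReal.natCast_lt_top k) hμΩ.lt_top⟩

end WeightedPoincare

/-- If there is a weight `w ∈ L¹(Ω)`, `w > 0` a.e., for which the
inequality `(P1*)` holds on locally Lipschitz functions with bounded local Lipschitz
constant on `Ω̂` whose zero set has positive `μ0`-measure, then `d_Ω̂ ∈ L¹(μ0)`.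
(The inequality is stated with lower integrals, so that finiteness of the right-hand
side automatically entails `f ∈ L¹(μ0)`.) -/
theorem stmt_3 (n : ℕ) (hn : 1 ≤ n) (Ω Ot : Set (En n))
    (hΩopen : IsOpen Ω) (hΩconn : IsConnected Ω) (hΩbdd : Bornology.IsBounded Ω)
    (hcov : Ω ⊆ Ot) (hcovnull : volume (Ot \ Ω) = 0)
    (x0 : En n) (hx0 : x0 ∈ Ω)
    (μ0 : Measure (En n)) [IsFiniteMeasure μ0] (hμ0ne : μ0 ≠ 0) (hμ0supp : μ0 Ωᶜ = 0)
    (w : En n → ℝ) (hwint : IntegrableOn w Ω volume)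
    (hwpos : ∀ᵐ x ∂volume.restrict Ω, 0 < w x)
    (hP : ∃ C : ℝ, 0 < C ∧
      ∀ f : En n → ℝ, LocLipBdd (hatSet Ot) f →
        0 < μ0 {x ∈ Ω | f x = 0} →
        ∫⁻ x in Ω, ENNReal.ofReal |f x| ∂μ0 ≤
          ENNReal.ofReal C * (1 + μ0 Ω / μ0 {x ∈ Ω | f x = 0}) *
            ∫⁻ x in Ω, ENNReal.ofReal (‖gradient f x‖ * w x)) :
    (∫⁻ x in Ω, geoDist (hatSet Ot) x0 x ∂μ0) < ⊤ := by
  obtain ⟨C, -, hP⟩ := hP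
  have : Nonempty (Fin n) := ⟨⟨0, hn⟩⟩
  have hne : Otᶜ.Nonempty := compl_nonempty_of_measure_diff_eq_zero
    (measure_univ_of_isAddLeftInvariant volume) hΩbdd.measure_lt_top.ne hcovnull
  rw [hatSet_eq_interior hne] at hP ⊢
  have hΩint : Ω ⊆ interior Ot := interior_maximal hcov hΩopen
  exact stmt_3_general isOpen_interior (isPreconnected_interior_of_measure_diff_eq_zero hΩopen
    hΩconn.isPreconnected hcov hcovnull) hΩopen.measurableSet hΩint (hΩint hx0)
    (measure_ne_top μ0 Ω) hwint hP
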